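/- Let ρ = |ψ⟩⟨ψ| be an n-qubit pure state and S ⊆ Fin n nonempty with |S| = s ≥ 1, and let P(q) = tr(ρ |Φ̃_q⟩⟨Φ̃_q|), q ∈ {1,2,3,4}^S, be the product SIC-POVM outcome distribution. Fix ε > 0 and δ ∈ (0,1), set N_B = ⌈8 log(1/δ)⌉ and K_opt = ⌈ (1/2)(16 ε^{−2} (3/2)^s + 1) + (1/2)√( (16 ε^{−2} (3/2)^s − 1)² + 32 ε^{−2} 3^s ) ⌉. Let Q₁, …, Q_{N_B·K_opt} be i.i.d. with distribution P, and for each batch b ∈ {1,…,N_B} define C̄^(b) = 1 − 3^s · Ŝ_b with Ŝ_b = (1/(K_opt(K_opt−1))) Σ_{k ≠ k', (b−1)K_opt < k,k' ≤ bK_opt} 1{Q_k = Q_{k'}}. Then P( |median(C̄^(1), …, C̄^(N_B)) − C_ψ(S)| ≥ ε ) ≤ δ. -/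

import Mathlib

open Matrix MeasureTheory
open scoped BigOperators ComplexConjugate Kronecker

/-- `n`-qubit operators: matrices indexed by functions `Fin n → Fin 2`. -/
abbrev QMat (n : ℕ) : Type := Matrix (Fin n → Fin 2) (Fin n → Fin 2) ℂ

/-- Combine an assignment on `α` and one on its complement into a full index. -/
noncomputable def embedIdx {n : ℕ} (α : Finset (Fin n)) (i : {x : Fin n // x ∈ α} → Fin 2)
    (k : {x : Fin n // x ∉ α} → Fin 2) : Fin n → Fin 2 :=
  fun x => if h : x ∈ α then i ⟨x, h⟩ else k ⟨x, h⟩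

/-- The reduced density matrix on the qubits in `α` (partial trace over the rest). -/
noncomputable def reduced {n : ℕ} (ρ : QMat n) (α : Finset (Fin n)) :
    Matrix ({x : Fin n // x ∈ α} → Fin 2) ({x : Fin n // x ∈ α} → Fin 2) ℂ :=
  fun i j => ∑ k : ({x : Fin n // x ∉ α} → Fin 2), ρ (embedIdx α i k) (embedIdx α j k)

/-- The concentratable entanglement `C_ψ(S) = 1 - 2^{-|S|} ∑_{α ⊆ S} tr(ρ_α²)`. -/
noncomputable def CE {n : ℕ} (ρ : QMat n) (S : Finset (Fin n)) : ℝ :=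
  1 - (1 / 2 : ℝ) ^ S.card *
    ∑ α ∈ S.powerset, (Matrix.trace (reduced ρ α * reduced ρ α)).re

/-- Tensor product of single-qubit operators on the qubits in `S`, identity elsewhere. -/
noncomputable def localOp {n : ℕ} (S : Finset (Fin n))
    (V : {i : Fin n // i ∈ S} → Matrix (Fin 2) (Fin 2) ℂ) : QMat n :=
  fun x y => ∏ i : Fin n,
    if h : i ∈ S then V ⟨i, h⟩ (x i) (y i)
    else (if x i = y i then 1 else 0)

/-- The four SIC vectors `φ₁, …, φ₄` in `ℂ²`. -/
noncomputable def sicVec : Fin 4 → Fin 2 → ℂ :=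
  ![![1, 0],
    ![((1 / Real.sqrt 3 : ℝ) : ℂ), ((Real.sqrt (2/3) : ℝ) : ℂ)],
    ![((1 / Real.sqrt 3 : ℝ) : ℂ),
      ((Real.sqrt (2/3) : ℝ) : ℂ) * Complex.exp (2 * Real.pi * Complex.I / 3)],
    ![((1 / Real.sqrt 3 : ℝ) : ℂ),
      ((Real.sqrt (2/3) : ℝ) : ℂ) * Complex.exp (4 * Real.pi * Complex.I / 3)]]

/-- The rescaled SIC-POVM vectors `φ̃ᵢ = φᵢ/√2`. -/
noncomputable def sicTilde (i : Fin 4) : Fin 2 → ℂ :=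
  fun a => sicVec i a / ((Real.sqrt 2 : ℝ) : ℂ)

/-- The product SIC-POVM element `|Φ̃_q⟩⟨Φ̃_q| = ⊗_{i∈S} |φ̃_{qᵢ}⟩⟨φ̃_{qᵢ}|` on the qubits
in `S`, identity elsewhere. -/
noncomputable def sicProj {n : ℕ} (S : Finset (Fin n))
    (q : {i : Fin n // i ∈ S} → Fin 4) : QMat n :=
  localOp S (fun i => Matrix.vecMulVec (sicTilde (q i)) (star (sicTilde (q i))))

/-- The SIC-POVM outcome probability `P(q) = tr(ρ |Φ̃_q⟩⟨Φ̃_q|)`. -/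
noncomputable def sicBorn {n : ℕ} (ρ : QMat n) (S : Finset (Fin n))
    (q : {i : Fin n // i ∈ S} → Fin 4) : ℝ :=
  (Matrix.trace (ρ * sicProj S q)).re

/-- The product SIC-POVM outcome distribution, as a measure on `{1,2,3,4}^S`. -/
noncomputable def sicMeasure {n : ℕ} (ρ : QMat n) (S : Finset (Fin n)) :
    Measure ({i : Fin n // i ∈ S} → Fin 4) :=
  ∑ q : ({i : Fin n // i ∈ S} → Fin 4), ENNReal.ofReal (sicBorn ρ S q) • Measure.dirac q

/-- `m₀` is a median of `x₁, …, x_m`: at least half of the `xᵢ` satisfy `xᵢ ≤ m₀` and at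
least half satisfy `xᵢ ≥ m₀`. -/
def IsMedian {m : ℕ} (x : Fin m → ℝ) (m₀ : ℝ) : Prop :=
  m ≤ 2 * (Finset.univ.filter fun i => x i ≤ m₀).card ∧
  m ≤ 2 * (Finset.univ.filter fun i => m₀ ≤ x i).card


/-!
On one qubit `∑ₖ Eₖ ⊗ Eₖ = (SWAP + 1) / 6` for the SIC effects `Eₖ`. Taking the product over the
qubits in `S` and expanding gives `6⁻ˢ ∑_{α ⊆ S} SWAP_α`, and `tr ((ρ ⊗ ρ) SWAP_α) = tr (ρ_α²)`
turns this into `C_ρ(S) = 1 - 3ˢ ∑ P(q)²`. So the task is to estimate the collision probability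
`∑ P²`, whose U-statistic is the fraction of colliding pairs in a batch. Two pairs of samples have
uncorrelated collision indicators when disjoint; pairs sharing one sample have covariance at most
`∑ P³`, and identical or swapped pairs at most `∑ P²`. Since each effect is at most `2⁻ˢ` and each
purity at most `1`, `∑ P² ≤ 3⁻ˢ` and `∑ P³ ≤ 6⁻ˢ`, and `K_opt` is the larger root of the quadratic
in `K` that makes the Chebyshev failure probability of one batch at most `1/4`. The median is off
only if at least half of the batches fail, which Hoeffding's inequality bounds by `exp (-N_B / 8)`.
-/

section MedianAmplification

open ProbabilityTheory

variable {Ω : Type*} [MeasurableSpace Ω] {μ : Measure Ω}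

theorem measureReal_mul_le_card_filter_mem_le_exp {ι : Type*} [Fintype ι] {A : ι → Set Ω}
    [∀ ω, DecidablePred (ω ∈ A ·)] (hA : ∀ i, MeasurableSet (A i)) (hind : iIndepSet A μ)
    {p t : ℝ} (hp : ∀ i, μ.real (A i) ≤ p) (hpt : p ≤ t) :
    μ.real {ω | t * Fintype.card ι ≤ (Finset.univ.filter (ω ∈ A ·)).card} ≤
      Real.exp (-(2 * Fintype.card ι * (t - p) ^ 2)) := by
  have := hind.isProbabilityMeasure
  let f (i : ι) : Ω → ℝ := (A i).indicator fun _ => 1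
  have hf (i : ι) : Measurable (f i) := measurable_const.indicator (hA i)
  have hf_mem (i : ι) (ω : Ω) : f i ω ∈ Set.Icc (0 : ℝ) 1 := by
    by_cases hω : ω ∈ A i <;> simp [f, hω]
  have hcard (ω : Ω) : ∑ i, f i ω = (Finset.univ.filter (ω ∈ A ·)).card := by
    simp [f, Set.indicator_apply]
  have hmean : ∑ i, μ[f i] ≤ Fintype.card ι * p := by
    refine (Finset.sum_le_card_nsmul _ _ p fun i _ => ?_).trans_eq (by simp)
    exact (integral_indicator_one (hA i)).trans_le (hp i)
  have hf_ind : iIndepFun f μ := hind.iIndepFun_indicator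
  have hcentered_ind : iIndepFun (fun i ω => f i ω - μ[f i]) μ :=
    hf_ind.comp (fun i x => x - ∫ ω, f i ω ∂μ) fun _ => by fun_prop
  have hoeffding := HasSubgaussianMGF.measure_sum_ge_le_of_iIndepFun hcentered_ind
    (s := Finset.univ)
    (fun i _ => hasSubgaussianMGF_of_mem_Icc (hf i).aemeasurable (.of_forall (hf_mem i)))
    (mul_nonneg (Fintype.card ι).cast_nonneg (sub_nonneg.2 hpt))
  refine (measureReal_mono fun ω hω => ?_).trans (hoeffding.trans_eq (congrArg Real.exp ?_))
  · simp only [Set.mem_ofPred_eq, Finset.sum_sub_distrib, hcard] at hω ⊢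
    linarith
  · rcases (Fintype.card ι).eq_zero_or_pos with h | h
    · simp [h]
    · simp only [sub_zero, nnnorm_one, one_div, inv_pow, Finset.sum_const, Finset.card_univ,
        nsmul_eq_mul, NNReal.coe_mul, NNReal.coe_natCast, NNReal.coe_inv, NNReal.coe_pow,
        NNReal.coe_ofNat]
      field_simp

theorem IsMedian.le_two_mul_card {m : ℕ} {x : Fin m → ℝ} {m₀ c ε : ℝ} (h : IsMedian x m₀)
    (hε : ε ≤ |m₀ - c|) : m ≤ 2 * (Finset.univ.filter fun i => ε ≤ |x i - c|).card := by
  rcases le_abs.1 hε with hε | hε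
  · exact h.2.trans <| Nat.mul_le_mul_left 2 <| Finset.card_le_card <|
      Finset.monotone_filter_right _ fun i _ hi => le_abs.2 <| .inl <| by linarith
  · exact h.1.trans <| Nat.mul_le_mul_left 2 <| Finset.card_le_card <|
      Finset.monotone_filter_right _ fun i _ hi => le_abs.2 <| .inr <| by linarith

theorem measureReal_le_abs_median_sub_le_exp {m : ℕ} {X : Fin m → Ω → ℝ} {med : Ω → ℝ}
    {c ε : ℝ} (hX : ∀ i, Measurable (X i)) (hind : iIndepFun X μ)
    (hfail : ∀ i, μ.real {ω | ε ≤ |X i ω - c|} ≤ 1 / 4)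
    (hmed : ∀ ω, IsMedian (fun i => X i ω) (med ω)) :
    μ.real {ω | ε ≤ |med ω - c|} ≤ Real.exp (-(m / 8)) := by
  have := hind.isProbabilityMeasure
  have hB : MeasurableSet {x : ℝ | ε ≤ |x - c|} := measurableSet_le (by fun_prop) (by fun_prop)
  have hA (i : Fin m) : MeasurableSet {ω | ε ≤ |X i ω - c|} := hX i hB
  have hA_ind : iIndepSet (fun i => {ω | ε ≤ |X i ω - c|}) μ :=
    (iIndepSet_iff_meas_biInter hA).2 fun s =>
      hind.measure_inter_preimage_eq_mul s fun _ _ => hB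
  classical
  refine (measureReal_mono fun ω hω => ?_).trans
    ((measureReal_mul_le_card_filter_mem_le_exp hA hA_ind hfail
      (t := 1 / 2) (by norm_num)).trans_eq (congrArg Real.exp ?_))
  · have hcard : (m : ℝ) ≤ 2 * (Finset.univ.filter fun i => ε ≤ |X i ω - c|).card := by
      exact_mod_cast (hmed ω).le_two_mul_card hω
    simp only [Set.mem_ofPred_eq, Fintype.card_fin]
    linarith
  · rw [Fintype.card_fin]
    ring

end MedianAmplification

section CollisionStatistic

open ProbabilityTheory

theorem cast_card_offDiag {ι : Type*} (s : Finset ι) :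
    (s.offDiag.card : ℝ) = s.card * (s.card - 1) := by
  rw [Finset.offDiag_card, Nat.cast_sub (Nat.le_mul_self _), Nat.cast_mul]
  ring

theorem cast_card_offDiag_sdiff_offDiag_compl_pair {ι : Type*} [Fintype ι] [DecidableEq ι]
    {k l : ι} (hkl : k ≠ l) :
    ((Finset.univ.offDiag \ ({k, l}ᶜ : Finset ι).offDiag).card : ℝ) = 4 * Fintype.card ι - 6 := by
  have htwo : 2 ≤ Fintype.card ι := Finset.card_pair hkl ▸ Finset.card_le_univ _
  rw [Finset.cast_card_sdiff (Finset.offDiag_mono (Finset.subset_univ _)), cast_card_offDiag,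
    cast_card_offDiag, Finset.card_compl, Finset.card_pair hkl, Finset.card_univ,
    Nat.cast_sub htwo]
  push_cast
  ring

theorem memLp_indicator_one {Ω : Type*} [MeasurableSpace Ω] {μ : Measure Ω} [IsFiniteMeasure μ]
    {p : ENNReal} {E : Set Ω} (hE : MeasurableSet E) : MemLp (E.indicator (1 : Ω → ℝ)) p μ :=
  memLp_indicator_const p hE 1 (.inr (measure_ne_top μ E))

theorem covariance_indicator_one_le {Ω : Type*} [MeasurableSpace Ω] {μ : Measure Ω}
    [IsProbabilityMeasure μ] {E F : Set Ω} (hE : MeasurableSet E) (hF : MeasurableSet F) :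
    cov[E.indicator (1 : Ω → ℝ), F.indicator (1 : Ω → ℝ); μ] ≤ μ.real (E ∩ F) := by
  have hnonneg (G : Set Ω) : 0 ≤ μ[G.indicator (1 : Ω → ℝ)] :=
    integral_nonneg (Set.indicator_nonneg fun _ _ => zero_le_one)
  rw [covariance_eq_sub (memLp_indicator_one hE) (memLp_indicator_one hF),
    ← Set.inter_indicator_one, integral_indicator_one (hE.inter hF)]
  exact sub_le_self _ (mul_nonneg (hnonneg E) (hnonneg F))

variable {Ω ι α : Type*} [MeasurableSpace Ω] {μ : Measure Ω}

/-- The collision U-statistic of a sample: the fraction of ordered pairs of distinct indices at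
which the sample takes the same value. It estimates the collision probability `∑ a, P(a)²`. -/
noncomputable def collisionRate [Fintype ι] [DecidableEq ι] [DecidableEq α] (x : ι → α) : ℝ :=
  1 / ((Fintype.card ι : ℝ) * ((Fintype.card ι : ℝ) - 1)) *
    ∑ k, ∑ l, if k ≠ l ∧ x k = x l then 1 else 0

/-- The power sum `∑ a, P(a)ʳ`: for `1 ≤ r`, the probability that `r` independent samples of the
probability measure `P` all coincide. -/
noncomputable def powerSum [Fintype α] [MeasurableSpace α] (P : Measure α) (r : ℕ) : ℝ :=
  ∑ a, P.real {a} ^ r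

/-- The event that the two samples indexed by `p` coincide. -/
def collisionEvent (Q : ι → Ω → α) (p : ι × ι) : Set Ω := {ω | Q p.1 ω = Q p.2 ω}

theorem collisionRate_eq_sum_indicator {Ω : Type*} [Fintype ι] [DecidableEq ι] [DecidableEq α]
    (Q : ι → Ω → α) (ω : Ω) :
    collisionRate (fun i => Q i ω) = 1 / ((Fintype.card ι : ℝ) * ((Fintype.card ι : ℝ) - 1)) *
      (∑ p ∈ Finset.univ.offDiag, (collisionEvent Q p).indicator (1 : Ω → ℝ)) ω := by
  rw [collisionRate, Finset.sum_apply, ← Finset.sum_product', Finset.univ_product_univ]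
  congr 1
  have hfilter : (Finset.univ : Finset ι).offDiag = Finset.univ.filter fun p => p.1 ≠ p.2 := by
    ext p
    simp
  rw [hfilter, Finset.sum_filter]
  refine Finset.sum_congr rfl fun p _ => ?_
  simp [collisionEvent, Set.indicator_apply, ite_and]

theorem powerSum_nonneg [Fintype α] [MeasurableSpace α] (P : Measure α) (r : ℕ) :
    0 ≤ powerSum P r :=
  Finset.sum_nonneg fun _ _ => pow_nonneg measureReal_nonneg r

variable [MeasurableSpace α] [MeasurableSingletonClass α] {P : Measure α} {Q : ι → Ω → α}

theorem measurableSet_collisionEvent [Countable α] (hQ : ∀ i, Measurable (Q i)) (p : ι × ι) :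
    MeasurableSet (collisionEvent Q p) :=
  measurableSet_eq_fun (hQ p.1) (hQ p.2)

theorem covariance_collisionEvent_eq_zero [Countable α] (hQ : ∀ i, Measurable (Q i))
    (hind : iIndepFun Q μ) {p r : ι × ι} (h₁₁ : p.1 ≠ r.1) (h₁₂ : p.1 ≠ r.2) (h₂₁ : p.2 ≠ r.1)
    (h₂₂ : p.2 ≠ r.2) :
    cov[(collisionEvent Q p).indicator (1 : Ω → ℝ),
      (collisionEvent Q r).indicator (1 : Ω → ℝ); μ] = 0 := by
  have := hind.isProbabilityMeasure
  have hdiag : Measurable ((Set.diagonal α).indicator (1 : α × α → ℝ)) :=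
    measurable_one.indicator measurableSet_diagonal
  exact ((hind.indepFun_prodMk_prodMk hQ p.1 p.2 r.1 r.2 h₁₁ h₁₂ h₂₁ h₂₂).comp hdiag
    hdiag).covariance_eq_zero (memLp_indicator_one (measurableSet_collisionEvent hQ p))
      (memLp_indicator_one (measurableSet_collisionEvent hQ r))

variable [Fintype α]

theorem measureReal_forall_eq_eq_powerSum (hQ : ∀ i, MeasurePreserving (Q i) μ P)
    (hind : iIndepFun Q μ) {t : Finset ι} (ht : t.Nonempty) :
    μ.real {ω | ∃ a, ∀ i ∈ t, Q i ω = a} = powerSum P t.card := by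
  have := hind.isProbabilityMeasure
  have hfiber (a : α) : μ.real (⋂ i ∈ t, Q i ⁻¹' {a}) = P.real {a} ^ t.card := by
    rw [measureReal_def, hind.measure_inter_preimage_eq_mul t fun _ _ => measurableSet_singleton a,
      ENNReal.toReal_prod]
    exact Finset.prod_eq_pow_card fun i _ =>
      (hQ i).measureReal_preimage (measurableSet_singleton a).nullMeasurableSet
  have hunion : {ω | ∃ a, ∀ i ∈ t, Q i ω = a} = ⋃ a, ⋂ i ∈ t, Q i ⁻¹' {a} := by
    ext ω
    simp
  rw [hunion, measureReal_iUnion_fintype]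
  · exact Finset.sum_congr rfl fun a _ => hfiber a
  · obtain ⟨i, hi⟩ := ht
    intro a b hab
    refine Set.disjoint_left.2 fun ω ha hb => hab ?_
    simp only [Set.mem_iInter, Set.mem_preimage, Set.mem_singleton_iff] at ha hb
    rw [← ha i hi, hb i hi]
  · exact fun a => .biInter t.countable_toSet fun i _ =>
      (hQ i).measurable (measurableSet_singleton a)

theorem measureReal_collisionEvent (hQ : ∀ i, MeasurePreserving (Q i) μ P)
    (hind : iIndepFun Q μ) {p : ι × ι} (hp : p.1 ≠ p.2) :
    μ.real (collisionEvent Q p) = powerSum P 2 := by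
  classical
  rw [← Finset.card_pair hp, ← measureReal_forall_eq_eq_powerSum hQ hind ⟨p.1, by simp⟩]
  congr 1
  ext ω
  simp [collisionEvent, eq_comm]

theorem covariance_collisionEvent_le_powerSum_three (hQ : ∀ i, MeasurePreserving (Q i) μ P)
    (hind : iIndepFun Q μ) {p r : ι × ι} (hp : p.1 ≠ p.2) (hr : r.1 ≠ r.2) (hpr : r ≠ p)
    (hswap : r ≠ p.swap) (hcommon : r.1 = p.1 ∨ r.1 = p.2 ∨ r.2 = p.1 ∨ r.2 = p.2) :
    cov[(collisionEvent Q p).indicator (1 : Ω → ℝ),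
      (collisionEvent Q r).indicator (1 : Ω → ℝ); μ] ≤ powerSum P 3 := by
  classical
  have := hind.isProbabilityMeasure
  obtain ⟨x, hx₁, hx₂, hx⟩ : ∃ x, x ≠ p.1 ∧ x ≠ p.2 ∧
      collisionEvent Q p ∩ collisionEvent Q r ⊆ {ω | Q x ω = Q p.1 ω} := by
    obtain ⟨k, l⟩ := p
    obtain ⟨m, j⟩ := r
    simp only [ne_eq, Prod.mk.injEq, Prod.swap_prod_mk, not_and] at *
    rcases hcommon with rfl | rfl | rfl | rfl
    · exact ⟨j, Ne.symm hr, fun h => hpr rfl h, fun ω hω => hω.2.symm⟩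
    · exact ⟨j, fun h => hswap rfl h, Ne.symm hr, fun ω hω => hω.2.symm.trans hω.1.symm⟩
    · exact ⟨m, hr, fun h => hswap h rfl, fun ω hω => hω.2⟩
    · exact ⟨m, fun h => hpr h rfl, hr, fun ω hω => hω.2.trans hω.1.symm⟩
  have hcard : ({x, p.1, p.2} : Finset ι).card = 3 :=
    Finset.card_eq_three.2 ⟨x, p.1, p.2, hx₁, hx₂, hp, rfl⟩
  have hsub : collisionEvent Q p ∩ collisionEvent Q r ⊆
      {ω | ∃ a, ∀ i ∈ ({x, p.1, p.2} : Finset ι), Q i ω = a} := by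
    intro ω hω
    have h₁ : Q p.1 ω = Q p.2 ω := hω.1
    have h₂ : Q x ω = Q p.1 ω := hx hω
    exact ⟨Q p.1 ω, by simp [h₁, h₂]⟩
  have hmeas := measurableSet_collisionEvent fun i => (hQ i).measurable
  refine (covariance_indicator_one_le (hmeas p) (hmeas r)).trans
    ((measureReal_mono hsub).trans_eq ?_)
  rw [measureReal_forall_eq_eq_powerSum hQ hind ⟨x, by simp⟩, hcard]

theorem covariance_collisionEvent_le_powerSum_two (hQ : ∀ i, MeasurePreserving (Q i) μ P)
    (hind : iIndepFun Q μ) {p : ι × ι} (hp : p.1 ≠ p.2) (r : ι × ι) :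
    cov[(collisionEvent Q p).indicator (1 : Ω → ℝ),
      (collisionEvent Q r).indicator (1 : Ω → ℝ); μ] ≤ powerSum P 2 := by
  have := hind.isProbabilityMeasure
  have hmeas := measurableSet_collisionEvent fun i => (hQ i).measurable
  exact (covariance_indicator_one_le (hmeas p) (hmeas r)).trans
    ((measureReal_mono Set.inter_subset_left).trans_eq (measureReal_collisionEvent hQ hind hp))

theorem covariance_collisionEvent_le [DecidableEq ι] (hQ : ∀ i, MeasurePreserving (Q i) μ P)
    (hind : iIndepFun Q μ) {p r : ι × ι} (hp : p.1 ≠ p.2) (hr : r.1 ≠ r.2)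
    (hcommon : r.1 = p.1 ∨ r.1 = p.2 ∨ r.2 = p.1 ∨ r.2 = p.2) :
    cov[(collisionEvent Q p).indicator (1 : Ω → ℝ),
      (collisionEvent Q r).indicator (1 : Ω → ℝ); μ] ≤
      powerSum P 3 + if r ∈ ({p, p.swap} : Finset (ι × ι)) then powerSum P 2 else 0 := by
  split_ifs with hrp
  · exact (covariance_collisionEvent_le_powerSum_two hQ hind hp r).trans
      (le_add_of_nonneg_left (powerSum_nonneg P 3))
  · simp only [Finset.mem_insert, Finset.mem_singleton, not_or] at hrp
    rw [add_zero]
    exact covariance_collisionEvent_le_powerSum_three hQ hind hp hr hrp.1 hrp.2 hcommon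

variable [Fintype ι]

theorem sum_covariance_collisionEvent_le (hQ : ∀ i, MeasurePreserving (Q i) μ P)
    (hind : iIndepFun Q μ) {p : ι × ι} (hp : p.1 ≠ p.2) :
    ∑ r ∈ Finset.univ.offDiag, cov[(collisionEvent Q p).indicator (1 : Ω → ℝ),
      (collisionEvent Q r).indicator (1 : Ω → ℝ); μ] ≤
      4 * (Fintype.card ι - 1) * powerSum P 3 + 2 * powerSum P 2 := by
  classical
  have hzero (r : ι × ι) (hr : r ∈ Finset.univ.offDiag)
      (hr' : r ∉ Finset.univ.offDiag \ ({p.1, p.2}ᶜ : Finset ι).offDiag) :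
      cov[(collisionEvent Q p).indicator (1 : Ω → ℝ),
        (collisionEvent Q r).indicator (1 : Ω → ℝ); μ] = 0 := by
    simp only [Finset.mem_sdiff, Finset.mem_offDiag, Finset.mem_compl, Finset.mem_insert,
      Finset.mem_singleton] at hr hr'
    exact covariance_collisionEvent_eq_zero (fun i => (hQ i).measurable) hind
      (by tauto) (by tauto) (by tauto) (by tauto)
  have hterm (r : ι × ι) (hr : r ∈ Finset.univ.offDiag \ ({p.1, p.2}ᶜ : Finset ι).offDiag) :
      cov[(collisionEvent Q p).indicator (1 : Ω → ℝ),
        (collisionEvent Q r).indicator (1 : Ω → ℝ); μ] ≤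
      powerSum P 3 + if r ∈ ({p, p.swap} : Finset (ι × ι)) then powerSum P 2 else 0 := by
    simp only [Finset.mem_sdiff, Finset.mem_offDiag, Finset.mem_compl, Finset.mem_insert,
      Finset.mem_singleton, Finset.mem_univ, true_and] at hr
    exact covariance_collisionEvent_le hQ hind hp hr.1 (by tauto)
  have hpair : (Finset.filter (· ∈ ({p, p.swap} : Finset (ι × ι)))
      (Finset.univ.offDiag \ ({p.1, p.2}ᶜ : Finset ι).offDiag)).card ≤ 2 :=
    (Finset.card_le_card fun r hr => (Finset.mem_filter.1 hr).2).trans Finset.card_le_two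
  rw [← Finset.sum_subset Finset.sdiff_subset hzero]
  refine (Finset.sum_le_sum hterm).trans ?_
  rw [Finset.sum_add_distrib, Finset.sum_const, nsmul_eq_mul,
    cast_card_offDiag_sdiff_offDiag_compl_pair hp, ← Finset.sum_filter, Finset.sum_const,
    nsmul_eq_mul]
  gcongr
  · exact powerSum_nonneg P 3
  · linarith
  · exact powerSum_nonneg P 2
  · exact_mod_cast hpair

variable [DecidableEq ι] [DecidableEq α]

theorem integral_collisionRate [Nontrivial ι] (hQ : ∀ i, MeasurePreserving (Q i) μ P)
    (hind : iIndepFun Q μ) : ∫ ω, collisionRate (fun i => Q i ω) ∂μ = powerSum P 2 := by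
  have := hind.isProbabilityMeasure
  have hcard : (1 : ℝ) < Fintype.card ι := by exact_mod_cast Fintype.one_lt_card
  have hmeas := measurableSet_collisionEvent fun i => (hQ i).measurable
  simp_rw [collisionRate_eq_sum_indicator, Finset.sum_apply]
  rw [integral_const_mul, integral_finsetSum _ fun p _ =>
      (memLp_indicator_one (hmeas p)).integrable le_rfl,
    Finset.sum_congr rfl fun p hp => (integral_indicator_one (hmeas p)).trans
      (measureReal_collisionEvent hQ hind (Finset.mem_offDiag.1 hp).2.2),
    Finset.sum_const, nsmul_eq_mul, cast_card_offDiag, Finset.card_univ]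
  have := sub_pos.2 hcard
  field_simp

theorem variance_collisionRate_le [Nontrivial ι] (hQ : ∀ i, MeasurePreserving (Q i) μ P)
    (hind : iIndepFun Q μ) :
    Var[fun ω => collisionRate (fun i => Q i ω); μ] ≤
      (4 * (Fintype.card ι - 1) * powerSum P 3 + 2 * powerSum P 2) /
        (Fintype.card ι * (Fintype.card ι - 1)) := by
  have := hind.isProbabilityMeasure
  have hcard : (1 : ℝ) < Fintype.card ι := by exact_mod_cast Fintype.one_lt_card
  have hmeas := measurableSet_collisionEvent fun i => (hQ i).measurable
  have hsum : Var[∑ p ∈ Finset.univ.offDiag, (collisionEvent Q p).indicator (1 : Ω → ℝ); μ] ≤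
      Fintype.card ι * (Fintype.card ι - 1) *
        (4 * (Fintype.card ι - 1) * powerSum P 3 + 2 * powerSum P 2) := by
    rw [variance_sum' fun p _ => memLp_indicator_one (hmeas p), ← Finset.card_univ,
      ← cast_card_offDiag, ← nsmul_eq_mul]
    exact Finset.sum_le_card_nsmul _ _ _ fun p hp =>
      sum_covariance_collisionEvent_le hQ hind (Finset.mem_offDiag.1 hp).2.2
  simp_rw [collisionRate_eq_sum_indicator]
  rw [variance_const_mul]
  refine (mul_le_mul_of_nonneg_left hsum (sq_nonneg _)).trans_eq ?_
  have := sub_pos.2 hcard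
  field_simp

theorem measureReal_le_abs_collisionRate_sub_le [Nontrivial ι]
    (hQ : ∀ i, MeasurePreserving (Q i) μ P) (hind : iIndepFun Q μ) {η : ℝ} (hη : 0 < η) :
    μ.real {ω | η ≤ |collisionRate (fun i => Q i ω) - powerSum P 2|} ≤
      (4 * (Fintype.card ι - 1) * powerSum P 3 + 2 * powerSum P 2) /
        (Fintype.card ι * (Fintype.card ι - 1)) / η ^ 2 := by
  have := hind.isProbabilityMeasure
  have hmemLp : MemLp (fun ω => collisionRate (fun i => Q i ω)) 2 μ := by
    simp_rw [collisionRate_eq_sum_indicator]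
    exact (memLp_finsetSum' _ fun p _ => memLp_indicator_one
      (measurableSet_collisionEvent (fun i => (hQ i).measurable) p)).const_mul _
  have hchebyshev := meas_ge_le_variance_div_sq hmemLp hη
  rw [integral_collisionRate hQ hind] at hchebyshev
  refine (ENNReal.toReal_le_of_le_ofReal (div_nonneg (variance_nonneg _ _) (sq_nonneg η))
    hchebyshev).trans ?_
  gcongr
  exact variance_collisionRate_le hQ hind

end CollisionStatistic

section Batches

open ProbabilityTheory

variable {β κ α : Type*} [Fintype β] [Fintype κ] [MeasurableSpace α]
  (P : Measure α) [IsProbabilityMeasure P]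

theorem measurePreserving_curry_pi :
    MeasurePreserving (Function.curry : (β × κ → α) → β → κ → α) (Measure.pi fun _ => P)
      (Measure.pi fun _ => Measure.pi fun _ => P) where
  measurable := by fun_prop
  map_eq := by
    have hcurry := Measure.infinitePi_map_curry fun (_ : β) (_ : κ) => P
    simp only [Measure.infinitePi_eq_pi] at hcurry
    exact hcurry

theorem measurePreserving_batch (b : β) :
    MeasurePreserving (fun (ω : β × κ → α) k => ω (b, k)) (Measure.pi fun _ => P)
      (Measure.pi fun _ => P) :=
  (measurePreserving_eval (fun _ : β => Measure.pi fun _ : κ => P) b).comp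
    (measurePreserving_curry_pi P)

theorem iIndepFun_batch :
    iIndepFun (fun (b : β) (ω : β × κ → α) k => ω (b, k)) (Measure.pi fun _ => P) := by
  refine (iIndepFun_iff_map_fun_eq_pi_map fun b =>
    (measurePreserving_batch P b).measurable.aemeasurable).2 ?_
  simp only [(measurePreserving_batch P _).map_eq]
  exact (measurePreserving_curry_pi P).map_eq

end Batches

section MedianOfCollisionRates

open ProbabilityTheory

variable {κ α : Type*} [Fintype κ] [DecidableEq κ] [Fintype α] [DecidableEq α]
  [MeasurableSpace α] [MeasurableSingletonClass α] {P : Measure α} [IsProbabilityMeasure P]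

theorem pi_real_le_abs_collisionRate_sub_le [Nontrivial κ] {η : ℝ} (hη : 0 < η) :
    (Measure.pi fun _ : κ => P).real {x | η ≤ |collisionRate x - powerSum P 2|} ≤
      (4 * (Fintype.card κ - 1) * powerSum P 3 + 2 * powerSum P 2) /
        (Fintype.card κ * (Fintype.card κ - 1)) / η ^ 2 :=
  measureReal_le_abs_collisionRate_sub_le (measurePreserving_eval fun _ : κ => P)
    (iIndepFun_pi fun _ => aemeasurable_id) hη

theorem pi_real_le_abs_median_collisionRate_sub_le_exp [Nontrivial κ] {N : ℕ} {a c ε : ℝ}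
    (hc : 0 < c) (hε : 0 < ε)
    (hcard : c ^ 2 * (4 * (Fintype.card κ - 1) * powerSum P 3 + 2 * powerSum P 2) ≤
      ε ^ 2 / 4 * (Fintype.card κ * (Fintype.card κ - 1)))
    {med : (Fin N → ℝ) → ℝ} (hmed : ∀ x, IsMedian x (med x)) :
    (Measure.pi fun _ : Fin N × κ => P).real
      {ω | ε ≤ |med (fun b => a - c * collisionRate fun k => ω (b, k)) -
        (a - c * powerSum P 2)|} ≤ Real.exp (-(N / 8)) := by
  have hestimator : Measurable fun x : κ → α => a - c * collisionRate x := .of_discrete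
  refine measureReal_le_abs_median_sub_le_exp
    (fun b => hestimator.comp (measurePreserving_batch P b).measurable)
    ((iIndepFun_batch P).comp (fun _ x => a - c * collisionRate x) fun _ => hestimator)
    (fun b => ?_) fun ω => hmed _
  have hbatch : {ω : Fin N × κ → α | ε ≤ |a - c * collisionRate (fun k => ω (b, k)) -
      (a - c * powerSum P 2)|} =
      (fun ω k => ω (b, k)) ⁻¹' {x | ε / c ≤ |collisionRate x - powerSum P 2|} := by
    ext ω
    simp only [Set.mem_ofPred_eq, Set.mem_preimage]
    rw [sub_sub_sub_cancel_left, ← mul_sub, abs_mul, abs_of_pos hc, abs_sub_comm, div_le_iff₀' hc]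
  have hpos : (1 : ℝ) < Fintype.card κ := by exact_mod_cast Fintype.one_lt_card
  have := sub_pos.2 hpos
  simp only [Function.comp_def]
  rw [hbatch, (measurePreserving_batch P b).measureReal_preimage
    MeasurableSet.of_discrete.nullMeasurableSet]
  refine (pi_real_le_abs_collisionRate_sub_le (by positivity)).trans ?_
  rw [div_div, div_pow, div_le_iff₀ (by positivity)]
  field_simp
  linarith

end MedianOfCollisionRates

section DensityMatrix

open scoped ComplexOrder

variable {m : Type*} [Fintype m]

/-- Density matrices: the (possibly mixed) quantum states on `m → ℂ`. -/
structure IsDensityMatrix (ρ : Matrix m m ℂ) : Prop where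
  posSemidef : ρ.PosSemidef
  trace_eq_one : ρ.trace = 1

theorem isDensityMatrix_vecMulVec {ψ : m → ℂ} (hψ : ∑ x, star (ψ x) * ψ x = 1) :
    IsDensityMatrix (vecMulVec ψ (star ψ)) where
  posSemidef := posSemidef_vecMulVec_self_star ψ
  trace_eq_one := by
    rw [trace_vecMulVec, dotProduct_comm]
    exact hψ

namespace IsDensityMatrix

variable {ρ A : Matrix m m ℂ} {c : ℝ}

theorem kronecker_self (hρ : IsDensityMatrix ρ) : IsDensityMatrix (ρ ⊗ₖ ρ) where
  posSemidef := hρ.posSemidef.kronecker hρ.posSemidef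
  trace_eq_one := by rw [trace_kronecker, hρ.trace_eq_one, one_mul]

theorem trace_mul_nonneg (hρ : IsDensityMatrix ρ) (hc : 0 < c) (hA : A.IsHermitian)
    (hmul : A * A = c • A) : 0 ≤ (ρ * A).trace := by
  have hconj : c • (ρ * A).trace = (A * ρ * Aᴴ).trace := by
    rw [trace_mul_cycle, hA.eq, hmul, smul_mul_assoc, trace_smul, trace_mul_comm]
  rw [← inv_smul_smul₀ hc.ne' (ρ * A).trace, hconj]
  exact smul_nonneg (inv_nonneg.2 hc.le) (hρ.posSemidef.mul_mul_conjTranspose_same A).trace_nonneg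

theorem re_trace_mul_nonneg (hρ : IsDensityMatrix ρ) (hc : 0 < c) (hA : A.IsHermitian)
    (hmul : A * A = c • A) : 0 ≤ (ρ * A).trace.re :=
  (Complex.nonneg_iff.1 (hρ.trace_mul_nonneg hc hA hmul)).1

theorem ofReal_re_trace_mul (hρ : IsDensityMatrix ρ) (hc : 0 < c) (hA : A.IsHermitian)
    (hmul : A * A = c • A) : ((ρ * A).trace.re : ℂ) = (ρ * A).trace :=
  (Complex.eq_re_of_ofReal_le (r := 0) (hρ.trace_mul_nonneg hc hA hmul)).symm

theorem re_trace_mul_le (hρ : IsDensityMatrix ρ) (hc : 0 < c) (hA : A.IsHermitian)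
    (hmul : A * A = c • A) : (ρ * A).trace.re ≤ c := by
  classical
  have hcompl_mul : (c • 1 - A) * (c • 1 - A) = c • (c • 1 - A) := by
    simp only [sub_mul, mul_sub, smul_mul_assoc, mul_smul_comm, one_mul, mul_one, hmul, smul_sub,
      sub_self, sub_zero]
  have hcompl : (c • 1 - A).IsHermitian := (isHermitian_one.smul (.all c)).sub hA
  have h := hρ.re_trace_mul_nonneg hc hcompl hcompl_mul
  rw [mul_sub, mul_smul_comm, mul_one, trace_sub, trace_smul, hρ.trace_eq_one, Complex.sub_re,
    Complex.smul_re, Complex.one_re, smul_eq_mul, mul_one] at h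
  exact sub_nonneg.1 h

theorem re_trace_mul_le_one [DecidableEq m] (hρ : IsDensityMatrix ρ) (hA : A.IsHermitian)
    (hmul : A * A = 1) : (ρ * A).trace.re ≤ 1 := by
  have hcompl_mul : (1 - A) * (1 - A) = (2 : ℝ) • (1 - A) := by
    simp only [sub_mul, mul_sub, one_mul, mul_one, hmul, two_smul]
    abel
  have h := hρ.re_trace_mul_nonneg two_pos (isHermitian_one.sub hA) hcompl_mul
  rw [mul_sub, mul_one, trace_sub, hρ.trace_eq_one, Complex.sub_re, Complex.one_re] at h
  exact sub_nonneg.1 h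

end IsDensityMatrix

end DensityMatrix

section PartialSwap

variable {ι d : Type*} [DecidableEq ι]

/-- The exchange of the coordinates in `α` between the two copies of `ι → d`. Its permutation
matrix is the operator swapping the subsystems `α` of two copies of a quantum state. -/
def partialSwap (α : Finset ι) : Equiv.Perm ((ι → d) × (ι → d)) :=
  Function.Involutive.toPerm (fun z => (α.piecewise z.2 z.1, α.piecewise z.1 z.2)) fun z => by
    simp only [Finset.piecewise_idem_left, Finset.piecewise_idem_right, Finset.piecewise_same]

theorem partialSwap_apply (α : Finset ι) (z : (ι → d) × (ι → d)) :
    partialSwap α z = (α.piecewise z.2 z.1, α.piecewise z.1 z.2) := rfl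

theorem partialSwap_symm (α : Finset ι) : (partialSwap α : Equiv.Perm ((ι → d) × _)).symm =
    partialSwap α := Function.Involutive.toPerm_symm _

variable [Fintype ι] [DecidableEq d]

theorem isHermitian_permMatrix_partialSwap (α : Finset ι) :
    ((partialSwap α : Equiv.Perm ((ι → d) × _)).permMatrix ℂ).IsHermitian := by
  rw [IsHermitian, conjTranspose_permMatrix, Equiv.Perm.inv_def, partialSwap_symm]

theorem permMatrix_partialSwap_apply (α : Finset ι) (x x' y y' : ι → d) :
    (partialSwap α).permMatrix ℂ (x, x') (y, y') =
      (∏ i ∈ α, Equiv.Perm.permMatrix ℂ (Equiv.prodComm d d) (x i, x' i) (y i, y' i)) *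
        ∏ i ∈ αᶜ, (1 : Matrix (d × d) (d × d) ℂ) (x i, x' i) (y i, y' i) := by
  have hiff : α.piecewise x' x = y ∧ α.piecewise x x' = y' ↔
      (∀ i ∈ α, x' i = y i ∧ x i = y' i) ∧ ∀ i ∈ αᶜ, x i = y i ∧ x' i = y' i := by
    simp only [funext_iff, ← forall_and]
    refine forall_congr' fun i => ?_
    by_cases hi : i ∈ α <;> simp [hi]
  simp only [PEquiv.toMatrix_apply, Equiv.toPEquiv_apply, Option.mem_some_iff, partialSwap_apply,
    Equiv.prodComm_apply, Prod.swap_prod_mk, one_apply, Prod.mk.injEq, Finset.prod_ite_zero,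
    Finset.prod_const_one, hiff, ite_zero_mul_ite_zero, one_mul]

variable [Fintype d]

theorem permMatrix_partialSwap_mul_self (α : Finset ι) :
    (partialSwap α : Equiv.Perm ((ι → d) × _)).permMatrix ℂ * (partialSwap α).permMatrix ℂ = 1 := by
  rw [← permMatrix_mul, Equiv.Perm.mul_def]
  nth_rewrite 1 [← partialSwap_symm]
  rw [Equiv.symm_trans_self, permMatrix_refl]

theorem trace_kronecker_mul_permMatrix_partialSwap (ρ : Matrix (ι → d) (ι → d) ℂ)
    (α : Finset ι) : ((ρ ⊗ₖ ρ) * (partialSwap α).permMatrix ℂ).trace =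
      ∑ x, ∑ x', ρ x (α.piecewise x' x) * ρ x' (α.piecewise x x') := by
  simp only [trace, diag_apply, PEquiv.mul_toMatrix_toPEquiv, submatrix_apply, id_eq,
    partialSwap_symm, partialSwap_apply, Fintype.sum_prod_type, kroneckerMap_apply]

end PartialSwap

section ReducedPurity

variable {n : ℕ} (α : Finset (Fin n))

theorem sum_eq_sum_embedIdx {M : Type*} [AddCommMonoid M] (f : (Fin n → Fin 2) → M) :
    ∑ x, f x = ∑ i, ∑ k, f (embedIdx α i k) := by
  rw [← Fintype.sum_prod_type']
  exact ((Equiv.piEquivPiSubtypeProd (· ∈ α) fun _ => Fin 2).symm.sum_comp f).symm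

theorem piecewise_embedIdx (i j : {x : Fin n // x ∈ α} → Fin 2)
    (k l : {x : Fin n // x ∉ α} → Fin 2) :
    α.piecewise (embedIdx α i k) (embedIdx α j l) = embedIdx α i l := by
  ext x
  by_cases hx : x ∈ α <;> simp [embedIdx, hx]

theorem trace_reduced_mul_self (ρ : QMat n) : (reduced ρ α * reduced ρ α).trace =
    ((ρ ⊗ₖ ρ) * (partialSwap α).permMatrix ℂ).trace := by
  rw [trace_kronecker_mul_permMatrix_partialSwap]
  simp only [sum_eq_sum_embedIdx α, piecewise_embedIdx, trace, diag_apply, mul_apply, reduced,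
    Finset.sum_mul_sum]
  exact Finset.sum_congr rfl fun i _ => Finset.sum_comm

theorem IsDensityMatrix.re_trace_reduced_mul_self_le_one {ρ : QMat n} (hρ : IsDensityMatrix ρ) :
    (reduced ρ α * reduced ρ α).trace.re ≤ 1 := by
  rw [trace_reduced_mul_self]
  exact hρ.kronecker_self.re_trace_mul_le_one (isHermitian_permMatrix_partialSwap α)
    (permMatrix_partialSwap_mul_self α)

end ReducedPurity

section LocalOp

variable {n : ℕ} (S : Finset (Fin n)) (V W : {i : Fin n // i ∈ S} → Matrix (Fin 2) (Fin 2) ℂ)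

theorem localOp_apply (x y : Fin n → Fin 2) : localOp S V x y =
    (∏ i : {i // i ∈ S}, V i (x i) (y i)) *
      ∏ i ∈ Sᶜ, (1 : Matrix (Fin 2) (Fin 2) ℂ) (x i) (y i) := by
  rw [localOp, Fintype.prod_dite, Finset.prod_subtype Sᶜ fun _ => Finset.mem_compl]
  congr!

theorem localOp_mul : localOp S V * localOp S W = localOp S fun i => V i * W i := by
  ext x y
  have hfactor (i : Fin n) (a b : Fin 2) :
      (if h : i ∈ S then (V ⟨i, h⟩ * W ⟨i, h⟩) a b else if a = b then 1 else 0) =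
        ∑ c, (if h : i ∈ S then V ⟨i, h⟩ a c else if a = c then 1 else 0) *
          (if h : i ∈ S then W ⟨i, h⟩ c b else if c = b then 1 else 0) := by
    by_cases hi : i ∈ S <;> simp [hi, mul_apply]
  simp only [mul_apply (M := localOp S V), localOp, hfactor, Fintype.prod_sum,
    Finset.prod_mul_distrib]

theorem localOp_conjTranspose : (localOp S V)ᴴ = localOp S fun i => (V i)ᴴ := by
  ext x y
  simp only [conjTranspose_apply, localOp_apply, star_mul', star_prod, one_apply, eq_comm,
    apply_ite star, star_one, star_zero]

theorem localOp_smul (c : ℝ) : localOp S (fun i => c • V i) = c ^ S.card • localOp S V := by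
  ext x y
  simp only [localOp_apply, Matrix.smul_apply, Finset.prod_smul, Finset.prod_const, smul_mul_assoc,
    Finset.card_univ, Fintype.card_coe]

theorem localOp_one : localOp S (fun _ => 1) = 1 := by
  ext x y
  simp only [localOp, one_apply, dite_eq_ite, ite_self, Finset.prod_ite_zero, Finset.prod_const_one,
    Finset.mem_univ, true_imp_iff, funext_iff]

variable {κ : Type*} [Fintype κ] (E : κ → Matrix (Fin 2) (Fin 2) ℂ)

theorem sum_localOp : ∑ q : {i // i ∈ S} → κ, localOp S (fun i => E (q i)) =
    localOp S fun _ => ∑ k, E k := by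
  ext x y
  simp only [localOp_apply, Matrix.sum_apply, ← Finset.sum_mul, Fintype.prod_sum]

theorem sum_localOp_kronecker_self_apply (x x' y y' : Fin n → Fin 2) :
    (∑ q : {i // i ∈ S} → κ, localOp S (fun i => E (q i)) ⊗ₖ localOp S (fun i => E (q i)))
        (x, x') (y, y') =
      (∏ i ∈ S, (∑ k, E k ⊗ₖ E k) (x i, x' i) (y i, y' i)) *
        ∏ i ∈ Sᶜ, (1 : Matrix (Fin 2 × Fin 2) (Fin 2 × Fin 2) ℂ) (x i, x' i) (y i, y' i) := by
  rw [← Finset.prod_coe_sort S]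
  simp only [Matrix.sum_apply, Fintype.prod_sum, kroneckerMap_apply, localOp_apply,
    ← one_kronecker_one, Finset.prod_mul_distrib, Finset.sum_mul]
  exact Finset.sum_congr rfl fun q _ => mul_mul_mul_comm _ _ _ _

theorem sum_localOp_kronecker_self {E : κ → Matrix (Fin 2) (Fin 2) ℂ} {c : ℝ}
    (hE : ∑ k, E k ⊗ₖ E k = c • (Equiv.Perm.permMatrix ℂ (Equiv.prodComm _ _) + 1)) :
    ∑ q : {i // i ∈ S} → κ, localOp S (fun i => E (q i)) ⊗ₖ localOp S (fun i => E (q i)) =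
      c ^ S.card • ∑ α ∈ S.powerset, (partialSwap α).permMatrix ℂ := by
  ext ⟨x, x'⟩ ⟨y, y'⟩
  rw [sum_localOp_kronecker_self_apply, hE]
  simp only [Matrix.smul_apply, Matrix.add_apply, Finset.prod_smul, Finset.prod_const,
    smul_mul_assoc, Finset.prod_add, Matrix.sum_apply, Finset.sum_mul, mul_assoc]
  congr 1
  refine Finset.sum_congr rfl fun α hα => ?_
  rw [permMatrix_partialSwap_apply, ← compl_sdiff_compl,
    Finset.prod_sdiff (Finset.compl_subset_compl.2 (Finset.mem_powerset.1 hα))]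

end LocalOp

section SicEffect

/-- The relative phase `exp (2πi/3)` between the SIC vectors, a primitive cube root of unity. -/
noncomputable def sicPhase : ℂ := Complex.exp (2 * Real.pi * Complex.I / 3)

theorem isPrimitiveRoot_sicPhase : IsPrimitiveRoot sicPhase 3 :=
  Complex.isPrimitiveRoot_exp 3 three_ne_zero

theorem one_add_sicPhase_add_sq : 1 + sicPhase + sicPhase ^ 2 = 0 := by
  simpa only [Finset.sum_range_succ, Finset.sum_range_zero, zero_add, pow_zero, pow_one] using
    isPrimitiveRoot_sicPhase.geom_sum_eq_zero (by norm_num)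

theorem conj_sicPhase : conj sicPhase = sicPhase ^ 2 := by
  rw [← Complex.inv_eq_conj (isPrimitiveRoot_sicPhase.norm'_eq_one three_ne_zero)]
  exact inv_eq_of_mul_eq_one_right (by rw [← pow_succ', isPrimitiveRoot_sicPhase.pow_eq_one])

theorem ofReal_sqrt_two_sq : (Real.sqrt 2 : ℂ) ^ 2 = 2 := by
  exact_mod_cast Real.sq_sqrt two_pos.le

theorem sicVec_eq : sicVec = ![![1, 0],
    ![(Real.sqrt 3 : ℂ)⁻¹, Real.sqrt 2 / Real.sqrt 3],
    ![(Real.sqrt 3 : ℂ)⁻¹, Real.sqrt 2 / Real.sqrt 3 * sicPhase],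
    ![(Real.sqrt 3 : ℂ)⁻¹, Real.sqrt 2 / Real.sqrt 3 * sicPhase ^ 2]] := by
  have hsq : Complex.exp (4 * Real.pi * Complex.I / 3) = sicPhase ^ 2 := by
    rw [sicPhase, ← Complex.exp_nat_mul]
    congr 1
    push_cast
    ring
  rw [sicVec, hsq, Real.sqrt_div two_pos.le, one_div, Complex.ofReal_inv, Complex.ofReal_div,
    sicPhase]

/-- The single-qubit SIC-POVM elements `|φ̃ₖ⟩⟨φ̃ₖ|`. -/
noncomputable def sicEffect (k : Fin 4) : Matrix (Fin 2) (Fin 2) ℂ :=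
  vecMulVec (sicTilde k) (star (sicTilde k))

theorem sicEffect_eq : sicEffect = ![(!![1 / 2, 0; 0, 0] : Matrix (Fin 2) (Fin 2) ℂ),
    !![1 / 6, Real.sqrt 2 / 6; Real.sqrt 2 / 6, 1 / 3],
    !![1 / 6, Real.sqrt 2 / 6 * sicPhase ^ 2; Real.sqrt 2 / 6 * sicPhase, 1 / 3],
    !![1 / 6, Real.sqrt 2 / 6 * sicPhase; Real.sqrt 2 / 6 * sicPhase ^ 2, 1 / 3]] := by
  have h2 := ofReal_sqrt_two_sq
  have h3 : (Real.sqrt 3 : ℂ) ^ 2 = 3 := by exact_mod_cast Real.sq_sqrt three_pos.le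
  have h2_ne : (Real.sqrt 2 : ℂ) ≠ 0 := by rw [← pow_ne_zero_iff two_ne_zero, h2]; norm_num
  have h3_ne : (Real.sqrt 3 : ℂ) ≠ 0 := by rw [← pow_ne_zero_iff two_ne_zero, h3]; norm_num
  have hphase := isPrimitiveRoot_sicPhase.pow_eq_one
  ext k x y
  fin_cases k <;> fin_cases x <;> fin_cases y <;>
    simp [sicEffect, vecMulVec_apply, sicTilde, sicVec_eq, conj_sicPhase] <;>
    field_simp <;> grind

theorem isHermitian_sicEffect (k : Fin 4) : (sicEffect k).IsHermitian := by
  rw [IsHermitian, sicEffect, conjTranspose_vecMulVec, star_star]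

theorem sicEffect_mul_self (k : Fin 4) : sicEffect k * sicEffect k = (1 / 2 : ℝ) • sicEffect k := by
  have h2 := ofReal_sqrt_two_sq
  have hphase := isPrimitiveRoot_sicPhase.pow_eq_one
  ext x y
  fin_cases k <;> fin_cases x <;> fin_cases y <;> simp [sicEffect_eq, mul_apply] <;> grind

theorem sum_sicEffect : ∑ k, sicEffect k = 1 := by
  have hphase := one_add_sicPhase_add_sq
  ext x y
  fin_cases x <;> fin_cases y <;> simp [sicEffect_eq, Fin.sum_univ_four] <;> grind

theorem sum_sicEffect_kronecker_self : ∑ k, sicEffect k ⊗ₖ sicEffect k =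
    (1 / 6 : ℝ) • (Equiv.Perm.permMatrix ℂ (Equiv.prodComm _ _) + 1) := by
  have h2 := ofReal_sqrt_two_sq
  have hphase := one_add_sicPhase_add_sq
  ext ⟨x, x'⟩ ⟨y, y'⟩
  fin_cases x <;> fin_cases x' <;> fin_cases y <;> fin_cases y' <;>
    simp [sicEffect_eq, Fin.sum_univ_four, PEquiv.toMatrix_apply, one_apply] <;> grind

end SicEffect

section BornDistribution

variable {n : ℕ} (S : Finset (Fin n))

theorem sicProj_eq_localOp (q : {i // i ∈ S} → Fin 4) :
    sicProj S q = localOp S fun i => sicEffect (q i) := rfl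

theorem isHermitian_sicProj (q : {i // i ∈ S} → Fin 4) : (sicProj S q).IsHermitian := by
  simp only [IsHermitian, sicProj_eq_localOp, localOp_conjTranspose, (isHermitian_sicEffect _).eq]

theorem sicProj_mul_self (q : {i // i ∈ S} → Fin 4) :
    sicProj S q * sicProj S q = ((1 / 2) ^ S.card : ℝ) • sicProj S q := by
  simp only [sicProj_eq_localOp, localOp_mul, sicEffect_mul_self, localOp_smul]

theorem sum_sicProj : ∑ q, sicProj S q = 1 := by
  simp only [sicProj_eq_localOp, sum_localOp, sum_sicEffect, localOp_one]

theorem sum_sicProj_kronecker_self : ∑ q, sicProj S q ⊗ₖ sicProj S q =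
    ((1 / 6) ^ S.card : ℝ) • ∑ α ∈ S.powerset, (partialSwap α).permMatrix ℂ := by
  simp only [sicProj_eq_localOp]
  rw [sum_localOp_kronecker_self S sum_sicEffect_kronecker_self]

namespace IsDensityMatrix

variable {ρ : QMat n} (hρ : IsDensityMatrix ρ)
include hρ

theorem sicBorn_nonneg (q : {i // i ∈ S} → Fin 4) : 0 ≤ sicBorn ρ S q :=
  hρ.re_trace_mul_nonneg (by positivity) (isHermitian_sicProj S q) (sicProj_mul_self S q)

theorem sicBorn_le (q : {i // i ∈ S} → Fin 4) : sicBorn ρ S q ≤ (1 / 2) ^ S.card :=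
  hρ.re_trace_mul_le (by positivity) (isHermitian_sicProj S q) (sicProj_mul_self S q)

theorem ofReal_sicBorn (q : {i // i ∈ S} → Fin 4) :
    (sicBorn ρ S q : ℂ) = (ρ * sicProj S q).trace :=
  hρ.ofReal_re_trace_mul (by positivity) (isHermitian_sicProj S q) (sicProj_mul_self S q)

theorem sum_sicBorn : ∑ q, sicBorn ρ S q = 1 := by
  simp only [sicBorn, ← Complex.re_sum, ← trace_sum, ← Finset.mul_sum, sum_sicProj, mul_one,
    hρ.trace_eq_one, Complex.one_re]

theorem sum_sicBorn_sq : ∑ q, sicBorn ρ S q ^ 2 =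
    (1 / 6) ^ S.card * ∑ α ∈ S.powerset, (reduced ρ α * reduced ρ α).trace.re := by
  have hsq (q : {i // i ∈ S} → Fin 4) : ((sicBorn ρ S q ^ 2 : ℝ) : ℂ) =
      ((ρ ⊗ₖ ρ) * (sicProj S q ⊗ₖ sicProj S q)).trace := by
    rw [← mul_kronecker_mul, trace_kronecker, ← hρ.ofReal_sicBorn, ← sq, Complex.ofReal_pow]
  calc ∑ q, sicBorn ρ S q ^ 2
      = ((ρ ⊗ₖ ρ) * ∑ q, sicProj S q ⊗ₖ sicProj S q).trace.re := by
        rw [Finset.mul_sum, trace_sum, Complex.re_sum]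
        simp only [← hsq, Complex.ofReal_re]
    _ = _ := by
        rw [sum_sicProj_kronecker_self, mul_smul_comm, trace_smul, Complex.smul_re, smul_eq_mul,
          Finset.mul_sum, trace_sum, Complex.re_sum]
        simp only [trace_reduced_mul_self]

theorem CE_eq : CE ρ S = 1 - 3 ^ S.card * ∑ q, sicBorn ρ S q ^ 2 := by
  rw [CE, hρ.sum_sicBorn_sq, ← mul_assoc, ← mul_pow]
  norm_num

theorem sum_sicBorn_sq_le : ∑ q, sicBorn ρ S q ^ 2 ≤ (1 / 3) ^ S.card := by
  have hpurity := Finset.sum_le_card_nsmul S.powerset _ 1 fun α _ =>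
    hρ.re_trace_reduced_mul_self_le_one α
  rw [Finset.card_powerset, nsmul_one, Nat.cast_pow, Nat.cast_ofNat] at hpurity
  calc ∑ q, sicBorn ρ S q ^ 2 ≤ (1 / 6) ^ S.card * 2 ^ S.card := by
        rw [hρ.sum_sicBorn_sq]
        gcongr
    _ = (1 / 3) ^ S.card := by rw [← mul_pow]; norm_num

theorem isProbabilityMeasure_sicMeasure : IsProbabilityMeasure (sicMeasure ρ S) where
  measure_univ := by
    simp only [sicMeasure, Measure.finsetSum_apply, Measure.smul_apply, measure_univ, smul_eq_mul,
      mul_one]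
    rw [← ENNReal.ofReal_sum_of_nonneg fun q _ => hρ.sicBorn_nonneg S q, hρ.sum_sicBorn,
      ENNReal.ofReal_one]

theorem sicMeasure_real_singleton (q : {i // i ∈ S} → Fin 4) :
    (sicMeasure ρ S).real {q} = sicBorn ρ S q := by
  classical
  simp [Measure.real, sicMeasure, Measure.finsetSum_apply, Set.indicator_apply,
    hρ.sicBorn_nonneg S q]

theorem powerSum_sicMeasure (r : ℕ) : powerSum (sicMeasure ρ S) r = ∑ q, sicBorn ρ S q ^ r := by
  simp only [powerSum, hρ.sicMeasure_real_singleton]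

theorem CE_eq_powerSum_sicMeasure :
    CE ρ S = 1 - 3 ^ S.card * powerSum (sicMeasure ρ S) 2 := by
  rw [hρ.CE_eq, hρ.powerSum_sicMeasure]

theorem powerSum_sicMeasure_two_le : powerSum (sicMeasure ρ S) 2 ≤ (1 / 3) ^ S.card :=
  (hρ.powerSum_sicMeasure S 2).trans_le (hρ.sum_sicBorn_sq_le S)

theorem powerSum_sicMeasure_three_le : powerSum (sicMeasure ρ S) 3 ≤ (1 / 6) ^ S.card := by
  rw [hρ.powerSum_sicMeasure]
  calc ∑ q, sicBorn ρ S q ^ 3 ≤ ∑ q, (1 / 2) ^ S.card * sicBorn ρ S q ^ 2 := by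
        refine Finset.sum_le_sum fun q _ => ?_
        rw [pow_succ']
        exact mul_le_mul_of_nonneg_right (hρ.sicBorn_le S q) (sq_nonneg _)
    _ ≤ (1 / 2) ^ S.card * (1 / 3) ^ S.card := by
        rw [← Finset.mul_sum]
        exact mul_le_mul_of_nonneg_left (hρ.sum_sicBorn_sq_le S) (by positivity)
    _ = (1 / 6) ^ S.card := by rw [← mul_pow]; norm_num

end IsDensityMatrix

end BornDistribution

section BatchSize

theorem quadratic_of_root_le {a d K : ℝ} (hd : 0 < d)
    (hK : 1 / 2 * (a + 1) + 1 / 2 * Real.sqrt ((a - 1) ^ 2 + d) ≤ K) :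
    1 < K ∧ a * (K - 1) + d / 4 ≤ K * (K - 1) := by
  have hr0 := Real.sqrt_nonneg ((a - 1) ^ 2 + d)
  have hrsq : Real.sqrt ((a - 1) ^ 2 + d) ^ 2 = (a - 1) ^ 2 + d := Real.sq_sqrt (by positivity)
  set r := Real.sqrt ((a - 1) ^ 2 + d)
  have hlt : 1 - a < r := (le_abs_self _).trans_lt (abs_lt_of_sq_lt_sq (by nlinarith) hr0)
  exact ⟨by linarith, by nlinarith⟩

theorem IsDensityMatrix.sq_mul_powerSum_sicMeasure_le {n : ℕ} {ρ : QMat n}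
    (hρ : IsDensityMatrix ρ) (S : Finset (Fin n)) {ε K : ℝ} (hε : 0 < ε) (hK : 1 ≤ K)
    (hquad : 16 / ε ^ 2 * (3 / 2) ^ S.card * (K - 1) + 32 / ε ^ 2 * 3 ^ S.card / 4 ≤
      K * (K - 1)) :
    (3 ^ S.card) ^ 2 * (4 * (K - 1) * powerSum (sicMeasure ρ S) 3 +
      2 * powerSum (sicMeasure ρ S) 2) ≤ ε ^ 2 / 4 * (K * (K - 1)) := by
  have h₃ : (3 ^ S.card) ^ 2 * powerSum (sicMeasure ρ S) 3 ≤ (3 / 2) ^ S.card :=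
    (mul_le_mul_of_nonneg_left (hρ.powerSum_sicMeasure_three_le S) (by positivity)).trans_eq
      (by rw [← pow_mul, mul_comm, pow_mul', ← mul_pow]; norm_num)
  have h₂ : (3 ^ S.card) ^ 2 * powerSum (sicMeasure ρ S) 2 ≤ 3 ^ S.card :=
    (mul_le_mul_of_nonneg_left (hρ.powerSum_sicMeasure_two_le S) (by positivity)).trans_eq
      (by rw [sq, mul_assoc, ← mul_pow]; norm_num)
  calc (3 ^ S.card) ^ 2 * (4 * (K - 1) * powerSum (sicMeasure ρ S) 3 +
        2 * powerSum (sicMeasure ρ S) 2)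
      = 4 * (K - 1) * ((3 ^ S.card) ^ 2 * powerSum (sicMeasure ρ S) 3) +
          2 * ((3 ^ S.card) ^ 2 * powerSum (sicMeasure ρ S) 2) := by ring
    _ ≤ 4 * (K - 1) * (3 / 2) ^ S.card + 2 * 3 ^ S.card := by
        have := sub_nonneg.2 hK
        gcongr
    _ = ε ^ 2 / 4 * (16 / ε ^ 2 * (3 / 2) ^ S.card * (K - 1) +
          32 / ε ^ 2 * 3 ^ S.card / 4) := by
        field_simp
        ring
    _ ≤ ε ^ 2 / 4 * (K * (K - 1)) := by gcongr

end BatchSize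

theorem SIC_MoM_estimator_Kopt_general {n : ℕ} {ρ : QMat n} (hρ : IsDensityMatrix ρ)
    (S : Finset (Fin n)) {ε δ : ℝ} (hε : 0 < ε) (hδ : 0 < δ) {N K : ℕ}
    (hN : 8 * Real.log (1 / δ) ≤ N)
    (hK : 1 / 2 * (16 / ε ^ 2 * (3 / 2) ^ S.card + 1) +
      1 / 2 * Real.sqrt ((16 / ε ^ 2 * (3 / 2) ^ S.card - 1) ^ 2 + 32 / ε ^ 2 * 3 ^ S.card) ≤ K)
    (med : (Fin N → ℝ) → ℝ) (hmed : ∀ x, IsMedian x (med x)) :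
    (Measure.pi fun _ : Fin N × Fin K => sicMeasure ρ S)
      {ω | ε ≤ |med (fun b => 1 - 3 ^ S.card * collisionRate fun k => ω (b, k)) - CE ρ S|} ≤
      ENNReal.ofReal δ := by
  have := hρ.isProbabilityMeasure_sicMeasure S
  obtain ⟨hK_one, hK_quad⟩ := quadratic_of_root_le (by positivity) hK
  have : Nontrivial (Fin K) := Fin.nontrivial_iff_two_le.2 (by exact_mod_cast hK_one)
  have hδ_exp : Real.exp (-(N / 8)) ≤ δ := by
    rw [← Real.le_log_iff_exp_le hδ]
    rw [one_div, Real.log_inv] at hN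
    linarith
  rw [ENNReal.le_ofReal_iff_toReal_le (measure_ne_top _ _) hδ.le, ← measureReal_def,
    hρ.CE_eq_powerSum_sicMeasure]
  refine (pi_real_le_abs_median_collisionRate_sub_le_exp (by positivity) hε ?_ hmed).trans hδ_exp
  rw [Fintype.card_fin]
  exact hρ.sq_mul_powerSum_sicMeasure_le S hε hK_one.le hK_quad

/-- **CE estimation via SIC data and median-of-means with the optimized batch size
`K_opt`**: with `N_B = ⌈8 log(1/δ)⌉` batches of `K_opt` i.i.d. SIC outcomes each, any median
of the batch estimates is `ε`-close to `C_ψ(S)` with probability at least `1 - δ`. -/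
theorem SIC_MoM_estimator_Kopt (n : ℕ) (ψ : (Fin n → Fin 2) → ℂ)
    (hψ : (∑ x, star (ψ x) * ψ x) = 1)
    (S : Finset (Fin n)) (hS : S.Nonempty) (hs1 : 1 ≤ S.card)
    (ε δ : ℝ) (hε : 0 < ε) (hδ0 : 0 < δ) (hδ1 : δ < 1) (NB Kopt : ℕ)
    (hNB : NB = ⌈8 * Real.log (1 / δ)⌉₊)
    (hKopt : Kopt = ⌈(1 / 2 : ℝ) * (16 / ε ^ 2 * (3 / 2 : ℝ) ^ S.card + 1)
        + (1 / 2 : ℝ) * Real.sqrt ((16 / ε ^ 2 * (3 / 2 : ℝ) ^ S.card - 1) ^ 2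
            + 32 / ε ^ 2 * (3 : ℝ) ^ S.card)⌉₊)
    (med : (Fin NB → ℝ) → ℝ) (hmed : ∀ x, IsMedian x (med x)) :
    (Measure.pi fun _ : Fin NB × Fin Kopt =>
        sicMeasure (Matrix.vecMulVec ψ (star ψ)) S)
      {ω | ε ≤ |med (fun b => 1 - (3 : ℝ) ^ S.card *
              ((1 / ((Kopt : ℝ) * ((Kopt : ℝ) - 1))) * ∑ k : Fin Kopt, ∑ k' : Fin Kopt,
                if k ≠ k' ∧ ω (b, k) = ω (b, k') then 1 else 0))
            - CE (Matrix.vecMulVec ψ (star ψ)) S|}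
      ≤ ENNReal.ofReal δ := by
  simpa only [collisionRate, Fintype.card_fin] using SIC_MoM_estimator_Kopt_general
    (isDensityMatrix_vecMulVec hψ) S hε hδ0 (hNB ▸ Nat.le_ceil _) (hKopt ▸ Nat.le_ceil _) med hmed
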